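/- For all P, R ∈ \widetilde{P}_n, one has [P][R] = [P ∘ R]: the product in M_n of the minimal representatives of P and R equals the minimal representative of the product of P and R in \widetilde{P}_n. -/

import Mathlib

/-!
The minimal representative of a live, strongly synchronizing core transducer `T` depends only on
the maps `h_q` induced by its states: its states are distinguished by their maps, and these are the
maps `red h_q` (`minRep_spec`, `range_hmap_minRep`).  Here `red f` deletes the greatest common
prefix of the values of a nonconstant `f`, and replaces a constant `f` with purely periodic value
`y` by the constant `x x x …`, where `x` is the least rotation of the prime root of `y`.  Prepending
a word to all values does not change the reduction (`red_app`): in the nonconstant case the word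
becomes part of the common prefix, and in the constant case it only rotates the prime root.

Hence it is enough to compare, for each sufficiently long word `w`, the map `f_w` at the state of
`P * R` forced by `w` with the map `g_w` at the state of `[P] * [R]` forced by `w`, as the core
states are exactly the states forced by words of a fixed synchronizing length
(`range_hmap_core`), and identifying ω-equivalent states of the synchronous transducer `P * R` does
not affect the induced maps (`hmap_quot`).  If `q` is the state of `P` forced by `w`, then
`h_q = u h_{[q]}` for some word `u`, and `u` can be chosen so that the state of `R` reached after
reading `λ(w) u` is the state reached after reading the output of `[P]` on `w`: for nonconstant maps
`u = Λ(ε,q)`, and for constant ones `u` is extended by repetitions of `x` until it is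
synchronizing for `R` (`Related`).  Since the maps of `R` are likewise a word followed by those of
`[R]`, composing gives `f_w = v g_w` for a word `v` (`hmap_prod_eq_app`), so
`red f_w = red g_w`.

Induced maps are identified throughout by the recursion `h_q (a x) = λ(a,q) h_{π(a,q)} (x)`, which
has a unique solution on live transducers (`Sem.eq_hmap`).
-/

/-!
Common definitions: transducers over a finite alphabet, strong synchronization,
cores, ω-equivalence, minimal representatives, the monoids `M_n`, `SL_n`, `SO_n`,
the groups `O_n`, `L_n`, annotations, and the two-sided full shift.

Throughout, the alphabet is `Fin (n + 2)`, i.e. an alphabet of size `n + 2 ≥ 2`.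
-/

namespace ShiftPaper

/-- The alphabet with `n + 2` letters. -/
abbrev A (n : ℕ) : Type := Fin (n + 2)

/-- Finite words over the alphabet. -/
abbrev Word (n : ℕ) : Type := List (A n)

/-- A transducer over the alphabet `A n`: a finite nonempty set of states together with a
transition function `tr` and an output function `out` (possibly asynchronous). -/
structure Transducer (n : ℕ) where
  Q : Type
  fin : Finite Q
  ne : Nonempty Q
  tr : A n → Q → Q
  out : A n → Q → Word n

variable {n : ℕ}

instance (T : Transducer n) : Finite T.Q := T.fin
instance (T : Transducer n) : Nonempty T.Q := T.ne

/-- Extended transition function, reading a finite word from left to right. -/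
def dsts (T : Transducer n) : Word n → T.Q → T.Q
  | [], q => q
  | a :: w, q => dsts T w (T.tr a q)

/-- Extended output function along a finite word. -/
def outs (T : Transducer n) : Word n → T.Q → Word n
  | [], _ => []
  | a :: w, q => T.out a q ++ outs T w (T.tr a q)

/-- Every (nonempty) circuit in the transducer has nonempty output. -/
def CircuitsNonempty (T : Transducer n) : Prop :=
  ∀ (q : T.Q) (w : Word n), w ≠ [] → dsts T w q = q → outs T w q ≠ []

/-- `T` is synchronizing at level `k`: the state reached after reading any word of
length `k` does not depend on the starting state. -/
def SyncAt (T : Transducer n) (k : ℕ) : Prop :=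
  ∀ w : Word n, w.length = k → ∀ p q : T.Q, dsts T w p = dsts T w q

/-- `T` is strongly synchronizing: synchronizing at some level. -/
def StronglySync (T : Transducer n) : Prop := ∃ k, SyncAt T k

/-- The minimal synchronizing level (junk value `0` if `T` is not strongly synchronizing). -/
noncomputable def syncLevel (T : Transducer n) : ℕ := by
  classical
  exact if h : StronglySync T then Nat.find h else 0

/-- The infinite output stream produced from state `q` on reading the infinite input `x`
(the map `h_q`).  (Well defined on transducers all of whose circuits have nonempty
output; junk values otherwise.) -/
noncomputable def hmap (T : Transducer n) (q : T.Q) (x : ℕ → A n) : ℕ → A n := fun m => by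
  classical
  exact if h : ∃ k, m < (outs T ((List.range k).map x) q).length then
    (outs T ((List.range h.choose).map x) q).getD m default
  else default

/-- ω-equality of transducers: a bijection of the state sets under which corresponding
states induce the same maps on infinite sequences. -/
def OmegaEq (T U : Transducer n) : Prop :=
  ∃ f : T.Q ≃ U.Q, ∀ q, hmap T q = hmap U (f q)

/-- The setoid on states given by ω-equivalence of states. -/
def omegaSetoid (T : Transducer n) : Setoid T.Q :=
  ⟨fun p q => hmap T p = hmap T q, ⟨fun _ => rfl, fun h => h.symm, fun h h' => h.trans h'⟩⟩

/-- The transducer obtained by identifying ω-equivalent states. -/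
noncomputable def quotT (T : Transducer n) : Transducer n where
  Q := Quotient (omegaSetoid T)
  fin := Finite.of_surjective (Quotient.mk (omegaSetoid T))
    fun c => ⟨Quotient.out c, Quotient.out_eq c⟩
  ne := ⟨Quotient.mk (omegaSetoid T) (Classical.choice T.ne)⟩
  tr := fun a c => Quotient.mk (omegaSetoid T) (T.tr a (Quotient.out c))
  out := fun a c => T.out a (Quotient.out c)

/-- `q` is a state of the core of `T`: it is forced by some word whose length is a
synchronizing level of `T`. -/
def CoreState (T : Transducer n) (q : T.Q) : Prop :=
  ∃ (k : ℕ) (w : Word n), SyncAt T k ∧ w.length = k ∧ ∀ p, dsts T w p = q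

/-- `T` is core: it equals its core. -/
def IsCore (T : Transducer n) : Prop := ∀ q : T.Q, CoreState T q

/-- Auxiliary predicate used to make the core construction total. -/
def CoreStateE (T : Transducer n) (q : T.Q) : Prop :=
  CoreState T q ∨ ∀ p, ¬ CoreState T p

/-- The core of `T` (as a transducer). -/
noncomputable def coreT (T : Transducer n) : Transducer n where
  Q := {q : T.Q // CoreStateE T q}
  fin := Subtype.finite
  ne := by
    classical
    by_cases h : ∀ p, ¬ CoreState T p
    · exact ⟨⟨Classical.choice T.ne, Or.inr h⟩⟩
    · push_neg at h
      obtain ⟨p, hp⟩ := h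
      exact ⟨⟨p, Or.inl hp⟩⟩
  tr := fun a q => by
    classical
    exact if h : CoreStateE T (T.tr a q.1) then ⟨T.tr a q.1, h⟩ else q
  out := fun a q => T.out a q.1

/-- There exist two inputs whose outputs from `q` disagree at position `j`. -/
def Disagree (T : Transducer n) (q : T.Q) (j : ℕ) : Prop :=
  ∃ x y : ℕ → A n, hmap T q x j ≠ hmap T q y j

/-- The extent of incomplete response of `q` (the length of `Λ(ε,q)`) is finite. -/
def FiniteExtent (T : Transducer n) (q : T.Q) : Prop := ∃ j, Disagree T q j

/-- The extent of incomplete response `|Λ(ε,q)|` of the state `q`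
(junk value `0` when it is infinite). -/
noncomputable def extentLen (T : Transducer n) (q : T.Q) : ℕ := by
  classical
  exact if h : FiniteExtent T q then Nat.find h else 0

/-- The word `Λ(ε,q)`: the greatest common prefix of all outputs from `q`. -/
noncomputable def extentWord (T : Transducer n) (q : T.Q) : Word n :=
  (List.range (extentLen T q)).map (hmap T q fun _ => default)

/-- `T` has no states of incomplete response (`Λ(ε,q) = ε` for every state `q`). -/
def NoIncomplete (T : Transducer n) : Prop := ∀ q : T.Q, Disagree T q 0

/-- No two distinct states of `T` are ω-equivalent. -/
def WeaklyMinimal (T : Transducer n) : Prop :=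
  ∀ p q : T.Q, hmap T p = hmap T q → p = q

/-- The Lipschitz condition (SL3): around any circuit the output is as long as the input. -/
def SL3 (T : Transducer n) : Prop :=
  ∀ (q : T.Q) (Γ : Word n), dsts T Γ q = q → (outs T Γ q).length = Γ.length

/-- `T` is synchronous: it writes exactly one letter for each letter read. -/
def Synchronous (T : Transducer n) : Prop :=
  ∀ (a : A n) (q : T.Q), (T.out a q).length = 1

/-- Boolean lexicographic comparison of words. -/
def lexLtB : Word n → Word n → Bool
  | [], [] => false
  | [], _ :: _ => true
  | _ :: _, [] => false
  | a :: u, b :: v => if a < b then true else if b < a then false else lexLtB u v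

/-- The lexicographically least rotation of a word. -/
def minimalRot (w : Word n) : Word n :=
  ((List.range w.length).map fun i => w.rotate i).foldl
    (fun acc r => if lexLtB r acc then r else acc) w

/-- A nonempty word is prime if it is not a power of a strictly shorter word. -/
def IsPrime (w : Word n) : Prop :=
  w ≠ [] ∧ ∀ (u : Word n) (k : ℕ), w = (List.replicate k u).flatten → w.length ≤ u.length

/-- `v` is a rotation of `u`. -/
def RotEq (u v : Word n) : Prop := ∃ i : ℕ, v = u.rotate i

/-- The prime word of which the (eventually constant single) image point of `T` is a power
(used for the degenerate transducers `Z_x`; junk values otherwise). -/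
noncomputable def periodicRoot (T : Transducer n) : Word n := by
  classical
  exact
    if hp : ∃ m, 0 < m ∧ ∀ j, hmap T (Classical.choice T.ne) (fun _ => default) (j + m) =
        hmap T (Classical.choice T.ne) (fun _ => default) j
    then (List.range (Nat.find hp)).map (hmap T (Classical.choice T.ne) fun _ => default)
    else [default]

/-- Remove the incomplete response from the states of `T`: replace the output `λ(a,q)` by
`Λ(a,q) - Λ(ε,q)`.  (In the degenerate case where the extents of incomplete response are
infinite, all outputs are replaced by the minimal rotation of the prime root of the unique
image point, so that minimising produces the transducer `Z_x` of the paper.) -/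
noncomputable def removeIncomplete (T : Transducer n) : Transducer n where
  Q := T.Q
  fin := T.fin
  ne := T.ne
  tr := T.tr
  out := fun a q => by
    classical
    exact if ∀ p : T.Q, FiniteExtent T p then
      (T.out a q ++ extentWord T (T.tr a q)).drop (extentLen T q)
    else minimalRot (periodicRoot T)

/-- The minimal representative `[T]` of a strongly synchronizing core transducer `T`:
remove incomplete response, take the core, and identify ω-equivalent states. -/
noncomputable def minRep (T : Transducer n) : Transducer n :=
  quotT (coreT (removeIncomplete T))

/-- The single state transducer `Z_x` which outputs `x` on every input letter. -/
def Zword (x : Word n) : Transducer n where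
  Q := PUnit
  fin := inferInstance
  ne := ⟨PUnit.unit⟩
  tr := fun _ q => q
  out := fun _ _ => x

/-- The single state identity transducer. -/
def oneT : Transducer n where
  Q := PUnit
  fin := inferInstance
  ne := ⟨PUnit.unit⟩
  tr := fun _ q => q
  out := fun a _ => [a]

/-- The product transducer `T * U`: the outputs of `T` are processed by `U`. -/
noncomputable def prodT (T U : Transducer n) : Transducer n where
  Q := T.Q × U.Q
  fin := inferInstance
  ne := ⟨⟨Classical.choice T.ne, Classical.choice U.ne⟩⟩
  tr := fun a p => (T.tr a p.1, dsts U (T.out a p.1) p.2)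
  out := fun a p => outs U (T.out a p.1) p.2

/-- The product in `M_n`: the minimal representative of the core of `T * U`. -/
noncomputable def mulT (T U : Transducer n) : Transducer n :=
  minRep (coreT (prodT T U))

/-- Membership in the monoid `M_n` of minimal, strongly synchronizing, core transducers
(a transducer is minimal if it is core, has no states of incomplete response and no two
distinct ω-equivalent states, or it is one of the degenerate transducers `Z_x` for a prime
word `x` which is least in its rotation class). -/
def MnMem (T : Transducer n) : Prop :=
  CircuitsNonempty T ∧ StronglySync T ∧ IsCore T ∧
    ((NoIncomplete T ∧ WeaklyMinimal T) ∨
      ∃ x : Word n, IsPrime x ∧ minimalRot x = x ∧ OmegaEq T (Zword x))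

/-- Membership in the monoid `SL_n`: elements of `M_n` satisfying the Lipschitz condition. -/
def SLnMem (T : Transducer n) : Prop := MnMem T ∧ SL3 T

/-- Membership in the monoid `SO_n`: elements of `M_n` all of whose states induce injective
maps with clopen image. -/
def SOnMem (T : Transducer n) : Prop :=
  MnMem T ∧ ∀ q : T.Q, Function.Injective (hmap T q) ∧ IsClopen (Set.range (hmap T q))

/-- Membership in the group `O_n`: invertible elements of `SO_n` (with inverse in `SO_n`);
equality in `M_n` is ω-equality. -/
def OnMem (T : Transducer n) : Prop :=
  SOnMem T ∧ ∃ U : Transducer n, SOnMem U ∧ OmegaEq (mulT T U) oneT ∧ OmegaEq (mulT U T) oneT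

/-- Membership in the group `L_n = O_n ∩ SL_n`. -/
def LnMem (T : Transducer n) : Prop := OnMem T ∧ SL3 T

/-- Membership in the monoid `\widetilde{P}_n` of weakly minimal, synchronous, strongly
synchronizing core transducers. -/
def PtildeMem (T : Transducer n) : Prop :=
  CircuitsNonempty T ∧ StronglySync T ∧ IsCore T ∧ Synchronous T ∧ WeaklyMinimal T

/-- The product in `\widetilde{P}_n`: take the product transducer, identify ω-equivalent
states and take the core. -/
noncomputable def ptildeMul (P R : Transducer n) : Transducer n :=
  coreT (quotT (prodT P R))

/-- An annotation of (a strongly synchronizing core transducer satisfying the Lipschitz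
condition) `T`. -/
def Annotation (T : Transducer n) (α : T.Q → ℤ) : Prop :=
  ∀ (q : T.Q) (Γ : Word n),
    α (dsts T Γ q) = α q + ((outs T Γ q).length : ℤ) - (Γ.length : ℤ)

/-! ### The two-sided full shift -/

/-- The space of bi-infinite sequences over the alphabet `A n`. -/
abbrev FullShift (n : ℕ) : Type := ℤ → A n

/-- The `i`-th power of the shift map: `(shiftZ i x) j = x (j - i)`.
The shift `σ` itself is `shiftZ 1`. -/
def shiftZ (i : ℤ) (x : FullShift n) : FullShift n := fun j => x (j - i)

/-- The monoid of endomorphisms of the shift dynamical system: continuous maps on the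
space of bi-infinite sequences commuting with the shift. -/
def EndShift (n : ℕ) : Type :=
  {f : FullShift n → FullShift n // Continuous f ∧ ∀ x, f (shiftZ 1 x) = shiftZ 1 (f x)}

/-- The group of automorphisms of the shift dynamical system: homeomorphisms of the
space of bi-infinite sequences commuting with the shift. -/
def AutShift (n : ℕ) : Type :=
  {f : FullShift n → FullShift n // Continuous f ∧ (∀ x, f (shiftZ 1 x) = shiftZ 1 (f x)) ∧
    ∃ g : FullShift n → FullShift n, Continuous g ∧ (∀ x, g (f x) = x) ∧ ∀ x, f (g x) = x}

/-- The window `x_{i-k} … x_{i-1}` of a bi-infinite sequence. -/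
def window (x : FullShift n) (i : ℤ) (k : ℕ) : Word n :=
  (List.range k).map fun j => x (i - (k : ℤ) + (j : ℤ))

/-- The state of `L` forced by the window `x_{i-k} … x_{i-1}`. -/
noncomputable def forced (L : Transducer n) (k : ℕ) (x : FullShift n) (i : ℤ) : L.Q :=
  dsts L (window x i k) (Classical.choice L.ne)

/-- The output word written while processing the letter `x i`. -/
noncomputable def outAt (L : Transducer n) (k : ℕ) (x : FullShift n) (i : ℤ) : Word n :=
  L.out (x i) (forced L k x i)

/-- The defining specification of the map `(L, α) : X_n^ℤ → X_n^ℤ` induced by an annotated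
transducer: for each index `i`, with `q` the state forced by `x_{i-k} … x_{i-1}` and
`w = λ(x_i, q)`, the word `w` occupies the coordinates `i + α q, …, i + α q + |w| - 1`
of the image sequence `y`. -/
def SpecAt (L : Transducer n) (α : L.Q → ℤ) (k : ℕ) (x y : FullShift n) : Prop :=
  ∀ (i : ℤ) (j : ℕ), j < (outAt L k x i).length →
    y (i + α (forced L k x i) + (j : ℤ)) = (outAt L k x i).getD j default

/-- The map `(L, α) : X_n^ℤ → X_n^ℤ` induced by an annotated transducer. -/
noncomputable def inducedMap (L : Transducer n) (α : L.Q → ℤ) (k : ℕ) :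
    FullShift n → FullShift n := fun x m => by
  classical
  exact if h : ∃ p : ℤ × ℕ, p.2 < (outAt L k x p.1).length ∧
      p.1 + α (forced L k x p.1) + (p.2 : ℤ) = m then
    (outAt L k x h.choose.1).getD h.choose.2 default
  else default

/-- The map `κ` from the states of `T` to the states of its minimal representative. -/
noncomputable def kappa (T : Transducer n) (q : T.Q) : (minRep T).Q := by
  classical
  exact Quotient.mk (omegaSetoid (coreT (removeIncomplete T)))
    (if h : CoreStateE (removeIncomplete T) q then
      (⟨q, h⟩ : (coreT (removeIncomplete T)).Q)
    else Classical.choice (coreT (removeIncomplete T)).ne)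

/-- The annotation `\overline{α + β}` of the product `LM` in `SL_n`: its value at the
state `κ (s, t)` is `α s + β t + |Λ(ε, (s,t))|`, the extent of incomplete response being
computed in `core (L * M)`. -/
noncomputable def annProd (L M : Transducer n) (α : L.Q → ℤ) (β : M.Q → ℤ) :
    (mulT L M).Q → ℤ := fun c =>
  α (Quotient.out c).1.1.1 + β (Quotient.out c).1.1.2 +
    (extentLen (coreT (prodT L M)) (Quotient.out c).1 : ℤ)

/-- The set `ASL_n` of annotated transducers: pairs of a transducer and an integer-valued
function on its states. -/
def ASLPair (n : ℕ) := Σ T : Transducer n, T.Q → ℤ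

/-- Membership in `ASL_n`: either the transducer is in `SL_n` with no states of incomplete
response and the function is an annotation of it, or it is a degenerate `Z_a` for a letter
`a` (whose `annotation ∞` we model by allowing an arbitrary function). -/
def ASLMem (p : ASLPair n) : Prop :=
  (SLnMem p.1 ∧ NoIncomplete p.1 ∧ Annotation p.1 p.2) ∨ ∃ a : A n, OmegaEq p.1 (Zword [a])

/-- Equality in `ASL_n`: ω-equality of the transducers matching up the annotations, with
the two elements possibly both being the degenerate `(Z_a, ∞)` for the same letter `a`. -/
def ASLEq (p q : ASLPair n) : Prop :=
  (∃ f : p.1.Q ≃ q.1.Q, (∀ s, hmap p.1 s = hmap q.1 (f s)) ∧ ∀ s, q.2 (f s) = p.2 s) ∨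
    ∃ a : A n, OmegaEq p.1 (Zword [a]) ∧ OmegaEq q.1 (Zword [a])

/-- The product on `ASL_n`: `(L, α)(M, β) = (LM, \overline{α + β})`. -/
noncomputable def ASLmul (p q : ASLPair n) : ASLPair n :=
  ⟨mulT p.1 q.1, annProd p.1 q.1 p.2 q.2⟩

/-- The identity `(1, 0)` of `ASL_n`. -/
def ASLone : ASLPair n := ⟨oneT, fun _ => 0⟩

/-- Membership in `AL_n`: annotated elements of `L_n`. -/
def ALMem (p : ASLPair n) : Prop := LnMem p.1 ∧ Annotation p.1 p.2

/-- The element `([P], α)` of `ASL_n` with `α ((q) κ) = i + |Λ(ε, q)|`, associated to the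
endomorphism `σ^i ∘ f_P`. -/
noncomputable def phiPair (P : Transducer n) (i : ℤ) : ASLPair n :=
  ⟨minRep P, fun c => i + (extentLen P (Quotient.out c).1 : ℤ)⟩

/-- The unique state at the base of a circuit labelled `Γ` (junk value if there is none). -/
noncomputable def qcirc (T : Transducer n) (Γ : Word n) : T.Q := by
  classical
  exact if h : ∃ q, dsts T Γ q = q then h.choose else Classical.choice T.ne

/-- The prime root of a word: the prime word of which `w` is a power
(junk value `w` if there is none). -/
noncomputable def primeRoot (w : Word n) : Word n := by
  classical
  exact if h : ∃ u : Word n, IsPrime u ∧ ∃ k, w = (List.replicate k u).flatten then h.choose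
  else w

/-- The action of `T ∈ M_n` on (rotation classes of) prime words: `Γ` is sent to the prime
word of which `λ(Γ, q_Γ)` is a power, where `q_Γ` is the unique state with a circuit
labelled `Γ` based at it. -/
noncomputable def PiAct (T : Transducer n) (Γ : Word n) : Word n :=
  primeRoot (outs T Γ (qcirc T Γ))

/-- The cylinder set of one-sided infinite sequences with prefix `ν`. -/
def Cyl (ν : Word n) : Set (ℕ → A n) :=
  {x | ∀ (j : ℕ) (h : j < ν.length), x j = ν.get ⟨j, h⟩}

/-- `m_q = |B(q)|`: the least cardinality of a finite set of words whose cylinders are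
contained in, and together cover, the image of `h_q`. -/
noncomputable def mq (T : Transducer n) (q : T.Q) : ℕ :=
  sInf {m : ℕ | ∃ S : Finset (Word n), S.card = m ∧
    (∀ ν ∈ S, Cyl ν ⊆ Set.range (hmap T q)) ∧
    (⋃ ν ∈ S, Cyl ν) = Set.range (hmap T q)}

/-- The signature homomorphism `sig : O_n → (ℤ/(n-1))^×`, as an element of `ℤ/(n-1)`
(for our alphabet of size `n + 2`, the modulus is `n + 1`). -/
noncomputable def sigT (T : Transducer n) : ZMod (n + 1) :=
  (mq T (Classical.choice T.ne) : ZMod (n + 1))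


/-! ### Prepending words to sequences -/

/-- The infinite sequence `w x` obtained by prepending the word `w` to the sequence `x`. -/
def app (w : Word n) (x : ℕ → A n) : ℕ → A n := fun m =>
  if m < w.length then w.getD m default else x (m - w.length)

/-- The prefix of length `k` of an infinite sequence. -/
def pre (x : ℕ → A n) (k : ℕ) : Word n := (List.range k).map x

@[simp] theorem pre_length (x : ℕ → A n) (k : ℕ) : (pre x k).length = k := by simp [pre]

theorem app_lt {w : Word n} {x : ℕ → A n} {m : ℕ} (h : m < w.length) :
    app w x m = w.getD m default := by simp only [app, if_pos h]

theorem app_add (w : Word n) (x : ℕ → A n) (m : ℕ) : app w x (w.length + m) = x m := by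
  simp [app]

@[simp] theorem app_nil (x : ℕ → A n) : app [] x = x := by
  funext m; simp [app]

theorem app_append (u v : Word n) (x : ℕ → A n) : app (u ++ v) x = app u (app v x) := by
  funext m
  simp only [app, List.length_append]
  by_cases h1 : m < u.length
  · rw [if_pos (by omega), if_pos h1, List.getD_append _ _ _ _ h1]
  · rw [if_neg h1]
    by_cases h2 : m - u.length < v.length
    · rw [if_pos (by omega), if_pos h2, List.getD_append_right _ _ _ _ (by omega)]
    · rw [if_neg (by omega), if_neg h2]
      congr 1; omega

theorem app_injective (w : Word n) {x y : ℕ → A n} (h : app w x = app w y) : x = y := by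
  funext m
  rw [← app_add w x m, h, app_add]

theorem app_pre (x : ℕ → A n) (k : ℕ) : app (pre x k) (fun m => x (m + k)) = x := by
  funext m
  by_cases h : m < k
  · rw [app_lt (by simpa using h)]
    simp [pre, List.getD, h]
  · obtain ⟨j, rfl⟩ := Nat.exists_eq_add_of_le (not_lt.mp h)
    have := app_add (pre x k) (fun m => x (m + k)) j
    rw [pre_length] at this
    rw [this, Nat.add_comm]

theorem pre_app_singleton (a : A n) (x : ℕ → A n) (k : ℕ) :
    pre (app [a] x) (k + 1) = a :: pre x k := by
  simp only [pre, List.range_succ_eq_map, List.map_cons, List.map_map]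
  congr 1

theorem eq_of_app_eq {u v : Word n} {x y : ℕ → A n} (hl : u.length = v.length)
    (h : app u x = app v y) : u = v := by
  apply List.ext_getElem hl
  intro i h1 h2
  have := congrFun h i
  rw [app_lt h1, app_lt h2] at this
  simpa [List.getD, h1, h2] using this

/-! ### The maps induced by states -/

theorem dsts_append (T : Transducer n) (u v : Word n) (q : T.Q) :
    dsts T (u ++ v) q = dsts T v (dsts T u q) := by
  induction u generalizing q with
  | nil => rfl
  | cons a u ih => exact ih _

theorem outs_append (T : Transducer n) (u v : Word n) (q : T.Q) :
    outs T (u ++ v) q = outs T u q ++ outs T v (dsts T u q) := by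
  induction u generalizing q with
  | nil => rfl
  | cons a u ih => simp [outs, dsts, ih]

/-- Long input words have long outputs, uniformly in the word and the state.  This plays the
role of the condition that circuits have nonempty output. -/
def Live (T : Transducer n) : Prop :=
  ∀ m, ∃ K, ∀ (w : Word n) (q : T.Q), K ≤ w.length → m ≤ (outs T w q).length

/-- The family of maps `F` satisfies the recursion `F_q (a x) = λ(a,q) F_{π(a,q)} (x)`. -/
def Sem (T : Transducer n) (F : T.Q → (ℕ → A n) → (ℕ → A n)) : Prop :=
  ∀ a q x, F q (app [a] x) = app (T.out a q) (F (T.tr a q) x)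

theorem Sem.word {T : Transducer n} {F : T.Q → (ℕ → A n) → (ℕ → A n)} (h : Sem T F)
    (w : Word n) (q : T.Q) (x : ℕ → A n) :
    F q (app w x) = app (outs T w q) (F (dsts T w q) x) := by
  induction w generalizing q with
  | nil => simp [outs, dsts]
  | cons a w ih =>
    have : app (a :: w) x = app [a] (app w x) := app_append [a] w x
    rw [this, h, ih, outs, app_append, dsts]

theorem outs_pre_add (T : Transducer n) (q : T.Q) (x : ℕ → A n) (k j : ℕ) :
    outs T (pre x k) q <+: outs T (pre x (k + j)) q := by
  have : pre x (k + j) = pre x k ++ (List.range j).map (fun i => x (k + i)) := by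
    simp [pre, List.range_add, Function.comp_def]
  rw [this, outs_append]
  exact List.prefix_append _ _

theorem getD_of_prefix {u v : Word n} (h : u <+: v) {m : ℕ} (hm : m < u.length) :
    v.getD m default = u.getD m default := by
  obtain ⟨t, rfl⟩ := h
  exact List.getD_append _ _ _ _ hm

/-- The value of `hmap` does not depend on the prefix chosen in its definition. -/
theorem hmap_eq (T : Transducer n) (q : T.Q) (x : ℕ → A n) (m k : ℕ)
    (h : m < (outs T (pre x k) q).length) :
    hmap T q x m = (outs T (pre x k) q).getD m default := by
  have hex : ∃ k, m < (outs T ((List.range k).map x) q).length := ⟨k, h⟩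
  have h2 : m < (outs T (pre x hex.choose) q).length := hex.choose_spec
  have e : hmap T q x m = (outs T (pre x hex.choose) q).getD m default := by
    unfold hmap
    rw [dif_pos hex]; rfl
  rw [e]
  rcases le_total k hex.choose with hk | hk
  · obtain ⟨j, hj⟩ := Nat.exists_eq_add_of_le hk
    rw [hj]
    exact getD_of_prefix (outs_pre_add T q x k j) h
  · obtain ⟨j, hj⟩ := Nat.exists_eq_add_of_le hk
    rw [hj]
    exact (getD_of_prefix (outs_pre_add T q x _ j) h2).symm

theorem Live.sem {T : Transducer n} (hT : Live T) : Sem T (hmap T) := by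
  intro a q x
  funext m
  obtain ⟨K, hK⟩ := hT (m + 1)
  have hlen : m < (outs T (pre (app [a] x) (K + 1)) q).length :=
    hK _ q (by simp)
  rw [hmap_eq T q _ m (K + 1) hlen]
  rw [pre_app_singleton, outs] at hlen ⊢
  by_cases h : m < (T.out a q).length
  · rw [app_lt h, List.getD_append _ _ _ _ h]
  · obtain ⟨j, rfl⟩ := Nat.exists_eq_add_of_le (not_lt.mp h)
    rw [app_add, List.getD_append_right _ _ _ _ (by omega), Nat.add_sub_cancel_left]
    refine (hmap_eq T _ x j K ?_).symm
    simp only [List.length_append] at hlen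
    omega

/-- On a live transducer the recursion characterizes the induced maps. -/
theorem Sem.eq_hmap {T : Transducer n} {F : T.Q → (ℕ → A n) → (ℕ → A n)} (h : Sem T F)
    (hT : Live T) (q : T.Q) : hmap T q = F q := by
  funext x m
  obtain ⟨K, hK⟩ := hT (m + 1)
  have hlen : m < (outs T (pre x K) q).length := hK _ q (by simp)
  rw [hmap_eq T q x m K hlen]
  conv_rhs => rw [← app_pre x K, h.word, app_lt hlen]

theorem Synchronous.outs_length {T : Transducer n} (h : Synchronous T) (w : Word n) (q : T.Q) :
    (outs T w q).length = w.length := by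
  induction w generalizing q with
  | nil => rfl
  | cons a w ih => simp [outs, ih, h a q]; omega

theorem Synchronous.live {T : Transducer n} (h : Synchronous T) : Live T :=
  fun m => ⟨m, fun w q hw => by rwa [h.outs_length]⟩

/-! ### Morphisms, products, cores and quotients -/

theorem dsts_map {T U : Transducer n} {κ : T.Q → U.Q}
    (h : ∀ a q, κ (T.tr a q) = U.tr a (κ q)) (w : Word n) (q : T.Q) :
    κ (dsts T w q) = dsts U w (κ q) := by
  induction w generalizing q with
  | nil => rfl
  | cons a w ih => rw [dsts, ih, h, dsts]

theorem outs_map {T U : Transducer n} {κ : T.Q → U.Q}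
    (h : ∀ a q, κ (T.tr a q) = U.tr a (κ q)) (ho : ∀ a q, T.out a q = U.out a (κ q))
    (w : Word n) (q : T.Q) : outs T w q = outs U w (κ q) := by
  induction w generalizing q with
  | nil => rfl
  | cons a w ih => rw [outs, ih, h, ho, outs]

theorem SyncAt.map {T U : Transducer n} {κ : T.Q → U.Q} (hs : Function.Surjective κ)
    (h : ∀ a q, κ (T.tr a q) = U.tr a (κ q)) {k : ℕ} (hk : SyncAt T k) : SyncAt U k := by
  intro w hw p q
  obtain ⟨p, rfl⟩ := hs p
  obtain ⟨q, rfl⟩ := hs q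
  rw [← dsts_map h, ← dsts_map h, hk w hw p q]

theorem SyncAt.dsts_eq {T : Transducer n} {k : ℕ} (h : SyncAt T k) {w : Word n}
    (hw : k ≤ w.length) (p q : T.Q) : dsts T w p = dsts T w q := by
  rw [← List.take_append_drop (w.length - k) w, dsts_append, dsts_append]
  exact h _ (by simp; omega) _ _

theorem SyncAt.mono {T : Transducer n} {k K : ℕ} (h : SyncAt T k) (hK : k ≤ K) : SyncAt T K :=
  fun _ hw p q => h.dsts_eq (hw ▸ hK) p q

/-- The state `(p, r)` of the product `T * U`. -/
def pair {T U : Transducer n} (p : T.Q) (r : U.Q) : (prodT T U).Q := (p, r)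

theorem dsts_prod (T U : Transducer n) (w : Word n) (p : T.Q) (r : U.Q) :
    dsts (prodT T U) w (pair p r) = pair (dsts T w p) (dsts U (outs T w p) r) := by
  induction w generalizing p r with
  | nil => rfl
  | cons a w ih =>
    show dsts (prodT T U) w (pair (T.tr a p) (dsts U (T.out a p) r)) = _
    rw [ih, dsts, outs, dsts_append]

theorem outs_prod (T U : Transducer n) (w : Word n) (p : T.Q) (r : U.Q) :
    outs (prodT T U) w (pair p r) = outs U (outs T w p) r := by
  induction w generalizing p r with
  | nil => rfl
  | cons a w ih =>
    show outs U (T.out a p) r ++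
      outs (prodT T U) w (pair (T.tr a p) (dsts U (T.out a p) r)) = _
    rw [ih, outs, outs_append]

theorem Live.prod {T U : Transducer n} (hT : Live T) (hU : Live U) : Live (prodT T U) := by
  intro m
  obtain ⟨K, hK⟩ := hU m
  obtain ⟨L, hL⟩ := hT K
  refine ⟨L, fun w q hw => ?_⟩
  obtain ⟨p, r⟩ := q
  exact (hK _ _ (hL _ _ hw)).trans_eq (congrArg List.length (outs_prod T U w p r).symm)

theorem hmap_prod {T U : Transducer n} (hT : Live T) (hU : Live U) (p : T.Q) (r : U.Q) :
    hmap (prodT T U) (pair p r) = fun x => hmap U r (hmap T p x) := by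
  have : Sem (prodT T U) (fun s x => hmap U s.2 (hmap T s.1 x)) := by
    intro a s x
    show hmap U s.2 (hmap T s.1 (app [a] x)) = _
    rw [hT.sem, hU.sem.word]
    rfl
  exact this.eq_hmap (hT.prod hU) (pair p r)

theorem exists_sync_prod {T U : Transducer n} (hT : Live T) (sT : StronglySync T)
    (sU : StronglySync U) : StronglySync (prodT T U) := by
  obtain ⟨k, hk⟩ := sT
  obtain ⟨l, hl⟩ := sU
  obtain ⟨K, hK⟩ := hT l
  -- After `k` letters the first coordinate is known; `K` further letters feed the second
  -- coordinate a known word of length at least `l`.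
  refine ⟨k + K, fun w hw => ?_⟩
  rintro ⟨p, r⟩ ⟨p', r'⟩
  show dsts (prodT T U) w (pair p r) = dsts (prodT T U) w (pair p' r')
  rw [dsts_prod, dsts_prod, hk.dsts_eq (by omega) p p']
  congr 1
  rw [← List.take_append_drop k w, outs_append, outs_append, dsts_append, dsts_append,
    hk.dsts_eq (by simp; omega) p p']
  exact hl.dsts_eq (hK _ _ (by simp; omega)) _ _

theorem coreState_iff {T : Transducer n} {K : ℕ} (hK : SyncAt T K) (q : T.Q) :
    CoreState T q ↔ ∃ w : Word n, w.length = K ∧ ∀ p, dsts T w p = q := by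
  constructor
  · rintro ⟨k, w, hk, hw, h⟩
    rcases le_total k K with hkK | hkK
    · refine ⟨List.replicate (K - k) default ++ w, by simp; omega, fun p => ?_⟩
      rw [dsts_append, h]
    · refine ⟨w.drop (k - K), by simp; omega, fun p => ?_⟩
      rw [hK _ (by simp; omega) p (dsts T (w.take (k - K)) p), ← dsts_append,
        List.take_append_drop, h]
  · rintro ⟨w, hw, h⟩
    exact ⟨K, w, hK, hw, h⟩

theorem coreStateE_iff {T : Transducer n} (hT : StronglySync T) (q : T.Q) :
    CoreStateE T q ↔ CoreState T q := by
  refine ⟨fun h => h.resolve_right fun h' => ?_, Or.inl⟩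
  obtain ⟨K, hK⟩ := hT
  exact h' (dsts T (List.replicate K default) (Classical.choice T.ne))
    ⟨K, _, hK, by simp, fun p => hK _ (by simp) _ _⟩

theorem CoreState.tr {T : Transducer n} {q : T.Q} (h : CoreState T q) (a : A n) :
    CoreState T (T.tr a q) := by
  obtain ⟨k, w, hk, hw, h⟩ := h
  refine ⟨k + 1, w ++ [a], hk.mono (by omega), by simp [hw], fun p => ?_⟩
  rw [dsts_append, h]; rfl

/-- The state of `T` underlying a state of its core. -/
def cval {T : Transducer n} (q : (coreT T).Q) : T.Q := q.1

theorem coreT_tr {T : Transducer n} (hT : StronglySync T) (a : A n) (q : (coreT T).Q) :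
    cval ((coreT T).tr a q) = T.tr a (cval q) := by
  have : CoreStateE T (T.tr a q.1) :=
    (coreStateE_iff hT _).2 (((coreStateE_iff hT _).1 q.2).tr a)
  exact congrArg Subtype.val (dif_pos this)

theorem coreT_dsts {T : Transducer n} (hT : StronglySync T) (w : Word n) (q : (coreT T).Q) :
    cval (dsts (coreT T) w q) = dsts T w (cval q) :=
  dsts_map (coreT_tr hT) w q

theorem coreT_outs {T : Transducer n} (hT : StronglySync T) (w : Word n) (q : (coreT T).Q) :
    outs (coreT T) w q = outs T w (cval q) :=
  outs_map (coreT_tr hT) (fun _ _ => rfl) w q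

theorem Live.core {T : Transducer n} (hT : StronglySync T) (h : Live T) : Live (coreT T) := by
  intro m
  obtain ⟨K, hK⟩ := h m
  exact ⟨K, fun w q hw => by rw [coreT_outs hT]; exact hK _ _ hw⟩

theorem hmap_core {T : Transducer n} (hT : StronglySync T) (h : Live T) (q : (coreT T).Q) :
    hmap (coreT T) q = hmap T (cval q) := by
  have : Sem (coreT T) (fun q => hmap T (cval q)) := by
    intro a q x
    show hmap T (cval q) (app [a] x) = app _ (hmap T (cval ((coreT T).tr a q)) x)
    rw [h.sem, coreT_tr hT]
    rfl
  exact this.eq_hmap (h.core hT) q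

theorem SyncAt.core {T : Transducer n} {k : ℕ} (h : SyncAt T k) : SyncAt (coreT T) k := by
  intro w hw p q
  apply Subtype.ext
  exact (coreT_dsts ⟨k, h⟩ w p).trans ((h w hw _ _).trans (coreT_dsts ⟨k, h⟩ w q).symm)

theorem isCore_core {T : Transducer n} (hT : StronglySync T) : IsCore (coreT T) := by
  intro q
  obtain ⟨k, w, hk, hw, h⟩ := (coreStateE_iff hT _).1 q.2
  exact ⟨k, w, hk.core, hw, fun p => Subtype.ext ((coreT_dsts hT w p).trans (h _))⟩

theorem range_hmap_core {T : Transducer n} (h : Live T) {K : ℕ} (hK : SyncAt T K) (q₀ : T.Q) :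
    Set.range (hmap (coreT T)) = {f | ∃ w : Word n, w.length = K ∧ f = hmap T (dsts T w q₀)} := by
  have hT : StronglySync T := ⟨K, hK⟩
  ext f
  constructor
  · rintro ⟨q, rfl⟩
    obtain ⟨w, hw, hq⟩ := (coreState_iff hK _).1 ((coreStateE_iff hT _).1 q.2)
    exact ⟨w, hw, by rw [hmap_core hT h, hq]; rfl⟩
  · rintro ⟨w, hw, rfl⟩
    exact ⟨⟨dsts T w q₀, Or.inl ⟨K, w, hK, hw, fun p => hK w hw _ _⟩⟩, hmap_core hT h _⟩

/-- ω-equivalent states write the same words.  This makes `quotT` independent of the chosen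
representatives; without it (e.g. in the presence of incomplete response) it can fail. -/
def OutCompat (T : Transducer n) : Prop :=
  ∀ p q : T.Q, hmap T p = hmap T q → ∀ a, T.out a p = T.out a q

/-- The class of a state in `quotT T`. -/
def cls (T : Transducer n) (q : T.Q) : (quotT T).Q := Quotient.mk (omegaSetoid T) q

theorem cls_surjective (T : Transducer n) : Function.Surjective (cls T) :=
  fun c => ⟨Quotient.out c, Quotient.out_eq c⟩

/-- The representative of a class used in the definition of `quotT T`. -/
noncomputable def crep {T : Transducer n} (c : (quotT T).Q) : T.Q :=
  Quotient.out (c : Quotient (omegaSetoid T))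

theorem hmap_out_cls (T : Transducer n) (q : T.Q) :
    hmap T (crep (cls T q)) = hmap T q :=
  Quotient.mk_out (s := omegaSetoid T) q

theorem cls_out {T : Transducer n} (hc : OutCompat T) (a : A n) (q : T.Q) :
    T.out a q = (quotT T).out a (cls T q) :=
  hc _ _ (hmap_out_cls T q).symm a

theorem cls_tr {T : Transducer n} (h : Live T) (hc : OutCompat T) (a : A n) (q : T.Q) :
    cls T (T.tr a q) = (quotT T).tr a (cls T q) := by
  refine Quotient.sound (s := omegaSetoid T) ?_
  show hmap T (T.tr a q) = hmap T (T.tr a (crep (cls T q)))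
  have e := hmap_out_cls T q
  funext x
  have := h.sem a q x
  rw [← e, h.sem, hc _ _ e a] at this
  exact (app_injective _ this).symm

theorem Live.quot {T : Transducer n} (h : Live T) (hc : OutCompat T) : Live (quotT T) := by
  intro m
  obtain ⟨K, hK⟩ := h m
  refine ⟨K, fun w q hw => ?_⟩
  obtain ⟨q, rfl⟩ := cls_surjective T q
  rw [← outs_map (cls_tr h hc) (cls_out hc)]
  exact hK _ _ hw

theorem hmap_quot {T : Transducer n} (h : Live T) (hc : OutCompat T) (q : T.Q) :
    hmap (quotT T) (cls T q) = hmap T q := by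
  have : Sem (quotT T)
      (fun c => hmap T (crep c)) := by
    intro a c x
    obtain ⟨q, rfl⟩ := cls_surjective T c
    show hmap T (crep (cls T q)) _ = app _ (hmap T (crep ((quotT T).tr a (cls T q))) x)
    rw [← cls_out hc, ← cls_tr h hc, hmap_out_cls, hmap_out_cls, h.sem]
  rw [this.eq_hmap (h.quot hc), hmap_out_cls]

theorem hmap_quot_injective {T : Transducer n} (h : Live T) (hc : OutCompat T) :
    Function.Injective (hmap (quotT T)) := by
  intro c d e
  obtain ⟨p, rfl⟩ := cls_surjective T c
  obtain ⟨q, rfl⟩ := cls_surjective T d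
  rw [hmap_quot h hc, hmap_quot h hc] at e
  exact Quotient.sound (s := omegaSetoid T) e

/-! ### Periodic sequences and their prime roots -/

/-- Pure periodicity of a sequence. -/
def PurelyPeriodic (y : ℕ → A n) : Prop := ∃ m, 0 < m ∧ ∀ j, y (j + m) = y j

/-- The prime root of a purely periodic sequence (`[default]` if `y` is not purely periodic,
matching `periodicRoot`). -/
noncomputable def proot (y : ℕ → A n) : Word n := by
  classical
  exact if hp : ∃ m, 0 < m ∧ ∀ j, y (j + m) = y j then (List.range (Nat.find hp)).map y
    else [default]

/-- The periodic sequence `w w w …`. -/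
def rep (w : Word n) : ℕ → A n := fun m => w.getD (m % w.length) default

theorem rep_eq_app (w : Word n) : rep w = app w (rep w) := by
  funext m
  by_cases h : m < w.length
  · rw [app_lt h, rep, Nat.mod_eq_of_lt h]
  · obtain ⟨j, rfl⟩ := Nat.exists_eq_add_of_le (not_lt.mp h)
    rw [app_add, rep, Nat.add_mod_left]; rfl

theorem period_mul {y : ℕ → A n} {p : ℕ} (h : ∀ j, y (j + p) = y j) (i k : ℕ) :
    y (i + p * k) = y i := by
  induction k with
  | zero => simp
  | succ k ih => rw [Nat.mul_succ, ← Nat.add_assoc, h, ih]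

theorem period_mod {y : ℕ → A n} {p : ℕ} (h : ∀ j, y (j + p) = y j) (i : ℕ) :
    y (i % p) = y i := by
  conv_rhs => rw [← Nat.mod_add_div i p]
  exact (period_mul h _ _).symm

theorem proot_spec {y : ℕ → A n} (h : PurelyPeriodic y) :
    ∃ p, 0 < p ∧ (∀ j, y (j + p) = y j) ∧ proot y = (List.range p).map y := by
  classical
  refine ⟨Nat.find h, (Nat.find_spec h).1, (Nat.find_spec h).2, ?_⟩
  exact dif_pos h

theorem rotate_root {y : ℕ → A n} {p : ℕ} (h : ∀ j, y (j + p) = y j) (j : ℕ) :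
    ((List.range p).map y).rotate j = (List.range p).map (fun m => y (m + j)) := by
  apply List.ext_getElem (by simp)
  intro i h1 h2
  simp [List.getElem_rotate, period_mod h]

theorem rep_rotate_proot {y : ℕ → A n} (h : PurelyPeriodic y) (j : ℕ) :
    rep ((proot y).rotate j) = fun m => y (m + j) := by
  obtain ⟨p, hp, hper, e⟩ := proot_spec h
  rw [e, rotate_root hper]
  funext m
  have hlt := Nat.mod_lt m hp
  simp only [rep, List.length_map, List.length_range, List.getD, List.getElem?_map,
    List.getElem?_range hlt, Option.map_some, Option.getD_some]
  rw [← period_mod hper, Nat.mod_add_mod, period_mod hper]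

theorem proot_shift {y : ℕ → A n} (h : PurelyPeriodic y) (j : ℕ) :
    proot (fun m => y (m + j)) = (proot y).rotate j := by
  classical
  obtain ⟨p, hp, hper⟩ := h
  have key : ∀ m, (∀ i, y (i + m + j) = y (i + j)) ↔ ∀ i, y (i + m) = y i := by
    refine fun m => ⟨fun H i => ?_, fun H i => ?_⟩
    · -- move `i` past position `j` by adding the multiple `p * j ≥ j` of the period
      have hj : j ≤ p * j := Nat.le_mul_of_pos_left j hp
      rw [← period_mul hper (i + m) j, ← period_mul hper i j]
      have := H (i + (p * j - j))
      rw [show i + (p * j - j) + m + j = i + m + p * j by omega,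
        show i + (p * j - j) + j = i + p * j by omega] at this
      exact this
    · rw [show i + m + j = i + j + m by omega, H]
  have h1 : ∃ m, 0 < m ∧ ∀ i, y (i + m) = y i := ⟨p, hp, hper⟩
  have h2 : ∃ m, 0 < m ∧ ∀ i, y (i + m + j) = y (i + j) := ⟨p, hp, (key p).2 hper⟩
  have e : Nat.find h2 = Nat.find h1 := by
    apply le_antisymm
    · exact Nat.find_min' _ ⟨(Nat.find_spec h1).1, (key _).2 (Nat.find_spec h1).2⟩
    · exact Nat.find_min' _ ⟨(Nat.find_spec h2).1, (key _).1 (Nat.find_spec h2).2⟩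
  have e1 : proot y = (List.range (Nat.find h1)).map y := by
    exact dif_pos h1
  have e2 : proot (fun m => y (m + j)) = (List.range (Nat.find h2)).map (fun m => y (m + j)) := by
    exact dif_pos h2
  rw [e1, e2, e, rotate_root (Nat.find_spec h1).2]

theorem lexLtB_iff (u v : Word n) : lexLtB u v = true ↔ u < v := by
  induction u generalizing v with
  | nil => cases v <;> simp [lexLtB]
  | cons a u ih =>
    cases v with
    | nil => simp [lexLtB]
    | cons b v =>
      rw [lexLtB, List.cons_lt_cons_iff]
      rcases lt_trichotomy a b with h | h | h
      · simp [h]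
      · subst h; simp [ih]
      · simp [h, h.not_gt, h.ne']

theorem foldl_least (l : List (Word n)) (w : Word n) :
    l.foldl (fun acc r => if lexLtB r acc then r else acc) w ∈ w :: l ∧
      ∀ v ∈ w :: l, l.foldl (fun acc r => if lexLtB r acc then r else acc) w ≤ v := by
  induction l generalizing w with
  | nil => simp
  | cons a l ih =>
    rw [List.foldl_cons]
    by_cases h : lexLtB a w = true
    · rw [if_pos h]
      rw [lexLtB_iff] at h
      obtain ⟨h1, h2⟩ := ih a
      refine ⟨List.mem_cons_of_mem _ h1, fun v hv => ?_⟩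
      rcases List.mem_cons.1 hv with rfl | hv
      · exact (h2 a (by simp)).trans h.le
      · exact h2 v hv
    · rw [if_neg h]
      rw [lexLtB_iff, not_lt] at h
      obtain ⟨h1, h2⟩ := ih w
      refine ⟨?_, fun v hv => ?_⟩
      · rcases List.mem_cons.1 h1 with h1 | h1
        · rw [h1]; simp
        · exact List.mem_cons_of_mem _ (List.mem_cons_of_mem _ h1)
      · rcases List.mem_cons.1 hv with rfl | hv
        · exact h2 v (by simp)
        rcases List.mem_cons.1 hv with rfl | hv
        · exact (h2 w (by simp)).trans h
        · exact h2 v (by simp [hv])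

theorem minimalRot_mem (w : Word n) : ∃ j, minimalRot w = w.rotate j := by
  have := (foldl_least ((List.range w.length).map fun i => w.rotate i) w).1
  rcases List.mem_cons.1 this with h | h
  · exact ⟨0, by rw [List.rotate_zero]; exact h⟩
  · obtain ⟨j, _, hj⟩ := List.mem_map.1 h
    exact ⟨j, hj.symm⟩

theorem minimalRot_le (w : Word n) (j : ℕ) : minimalRot w ≤ w.rotate j := by
  refine (foldl_least ((List.range w.length).map fun i => w.rotate i) w).2 _ ?_
  rcases Nat.eq_zero_or_pos w.length with h | h
  · rw [List.length_eq_zero_iff] at h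
    subst h; simp
  · refine List.mem_cons_of_mem _ (List.mem_map.2 ⟨j % w.length, ?_, List.rotate_mod _ _⟩)
    exact List.mem_range.2 (Nat.mod_lt _ h)

theorem minimalRot_rotate (w : Word n) (j : ℕ) : minimalRot (w.rotate j) = minimalRot w := by
  apply le_antisymm
  · obtain ⟨i, hi⟩ := minimalRot_mem w
    obtain ⟨k, hk⟩ : ∃ k, (w.rotate j).rotate k = w.rotate i := by
      have h : w.IsRotated (w.rotate j) := ⟨j, rfl⟩
      have h' : w.IsRotated (w.rotate i) := ⟨i, rfl⟩
      exact h.symm.trans h'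
    rw [hi, ← hk]
    exact minimalRot_le _ _
  · obtain ⟨i, hi⟩ := minimalRot_mem (w.rotate j)
    rw [hi, List.rotate_rotate]
    exact minimalRot_le _ _

theorem minimalRot_proot_of_app {u : Word n} {y z : ℕ → A n} (hy : PurelyPeriodic y)
    (h : y = app u z) : minimalRot (proot y) = minimalRot (proot z) := by
  have : z = fun m => y (m + u.length) := by
    funext m
    rw [h, Nat.add_comm, app_add]
  rw [this, proot_shift hy, minimalRot_rotate]

theorem minimalRot_proot_ne_nil {y : ℕ → A n} (hy : PurelyPeriodic y) :
    minimalRot (proot y) ≠ [] := by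
  obtain ⟨j, hj⟩ := minimalRot_mem (proot y)
  obtain ⟨p, hp, -, e⟩ := proot_spec hy
  intro h
  have := congrArg List.length hj
  rw [h, e] at this
  simp at this
  omega

/-- A purely periodic sequence ends in repetitions of the least rotation of its root. -/
theorem exists_app_rep {y : ℕ → A n} (hy : PurelyPeriodic y) :
    ∃ u, y = app u (rep (minimalRot (proot y))) := by
  obtain ⟨j, hj⟩ := minimalRot_mem (proot y)
  exact ⟨pre y j, by rw [hj, rep_rotate_proot hy, app_pre]⟩

/-! ### Reduction of a map on sequences -/

/-- The map `f` on sequences is not constant. -/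
def NonConst (f : (ℕ → A n) → (ℕ → A n)) : Prop := ∃ j, ∃ x y, f x j ≠ f y j

/-- The length of the greatest common prefix of the values of `f` (`0` for constant `f`). -/
noncomputable def ext (f : (ℕ → A n) → (ℕ → A n)) : ℕ := by
  classical
  exact if h : ∃ j, ∃ x y, f x j ≠ f y j then Nat.find h else 0

/-- The reduction of `f`: a nonconstant map loses the greatest common prefix of its values,
and a constant map with periodic value becomes constant at the repetition of the least
rotation of the prime root of that value. -/
noncomputable def red (f : (ℕ → A n) → (ℕ → A n)) : (ℕ → A n) → (ℕ → A n) := by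
  classical
  exact if NonConst f then fun x m => f x (m + ext f)
    else fun _ => rep (minimalRot (proot (f fun _ => default)))

theorem red_of_nonConst {f : (ℕ → A n) → (ℕ → A n)} (h : NonConst f) :
    red f = fun x m => f x (m + ext f) := if_pos h

theorem red_of_const {f : (ℕ → A n) → (ℕ → A n)} (h : ¬ NonConst f) :
    red f = fun _ => rep (minimalRot (proot (f fun _ => default))) := if_neg h

theorem const_of_not_nonConst {f : (ℕ → A n) → (ℕ → A n)} (h : ¬ NonConst f)
    (x y : ℕ → A n) : f x = f y := by
  funext j
  by_contra hne
  exact h ⟨j, x, y, hne⟩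

theorem ext_spec {f : (ℕ → A n) → (ℕ → A n)} (h : NonConst f) :
    (∃ x y, f x (ext f) ≠ f y (ext f)) ∧ ∀ j < ext f, ∀ x y, f x j = f y j := by
  classical
  have h' : ∃ j, ∃ x y, f x j ≠ f y j := h
  have e : ext f = Nat.find h' := dif_pos h'
  rw [e]
  refine ⟨Nat.find_spec h', fun j hj x y => ?_⟩
  by_contra hne
  exact Nat.find_min h' hj ⟨x, y, hne⟩

theorem ext_le {f : (ℕ → A n) → (ℕ → A n)} {j : ℕ} (h : ∃ x y, f x j ≠ f y j) : ext f ≤ j := by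
  by_contra hlt
  obtain ⟨x, y, hxy⟩ := h
  exact hxy ((ext_spec ⟨j, x, y, hxy⟩).2 j (not_le.mp hlt) x y)

/-- The greatest common prefix of the values of a nonconstant map. -/
noncomputable def extW (f : (ℕ → A n) → (ℕ → A n)) : Word n := pre (f fun _ => default) (ext f)

theorem eq_app_red {f : (ℕ → A n) → (ℕ → A n)} (h : NonConst f) (x : ℕ → A n) :
    f x = app (extW f) (red f x) := by
  rw [red_of_nonConst h]
  have : extW f = pre (f x) (ext f) := by
    refine List.map_congr_left fun i hi => ?_
    exact (ext_spec h).2 i (List.mem_range.1 hi) _ _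
  rw [this]
  exact (app_pre (f x) (ext f)).symm

theorem red_disagree {f : (ℕ → A n) → (ℕ → A n)} (h : NonConst f) :
    ∃ x y, red f x 0 ≠ red f y 0 := by
  rw [red_of_nonConst h]
  simpa using (ext_spec h).1

/-- The reduction is not affected by prepending a word, provided that a constant value is
purely periodic. -/
theorem red_app {f g : (ℕ → A n) → (ℕ → A n)} {u : Word n} (h : ∀ x, f x = app u (g x))
    (hper : ¬ NonConst f → PurelyPeriodic (f fun _ => default)) : red f = red g := by
  by_cases hf : NonConst f
  · have hlt : ∀ j < u.length, ∀ x y, f x j = f y j := fun j hj x y => by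
      rw [h, h, app_lt hj, app_lt hj]
    have hle : u.length ≤ ext f := by
      by_contra hlt'
      obtain ⟨⟨x, y, hxy⟩, -⟩ := ext_spec hf
      exact hxy (hlt _ (not_le.mp hlt') x y)
    obtain ⟨e, he⟩ := Nat.exists_eq_add_of_le hle
    have hadd : ∀ x m, f x (u.length + m) = g x m := fun x m => by rw [h, app_add]
    have hg0 : ∃ x y, g x e ≠ g y e := by
      obtain ⟨⟨x, y, hxy⟩, -⟩ := ext_spec hf
      rw [he, hadd, hadd] at hxy
      exact ⟨x, y, hxy⟩
    have hg : NonConst g := ⟨e, hg0⟩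
    have hge : ext g = e := by
      apply le_antisymm (ext_le hg0)
      have : ext f ≤ u.length + ext g := by
        apply ext_le
        obtain ⟨⟨x, y, hxy⟩, -⟩ := ext_spec hg
        exact ⟨x, y, by rwa [hadd, hadd]⟩
      omega
    rw [red_of_nonConst hf, red_of_nonConst hg]
    funext x m
    rw [he, hge, ← hadd]
    congr 1; omega
  · have hg : ¬ NonConst g := by
      rintro ⟨j, x, y, hxy⟩
      refine hf ⟨u.length + j, x, y, ?_⟩
      rwa [h, h, app_add, app_add]
    rw [red_of_const hf, red_of_const hg, minimalRot_proot_of_app (hper hf) (h _)]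

/-! ### The minimal representative -/

theorem dsts_iterate {T : Transducer n} {w : Word n} {q : T.Q}
    (h : dsts T w q = q) (k : ℕ) : dsts T (List.replicate k w).flatten q = q := by
  induction k with
  | zero => rfl
  | succ k ih => rw [List.replicate_succ, List.flatten_cons, dsts_append, h, ih]

theorem purelyPeriodic_of_circuit {T : Transducer n} (hT : Live T) {w : Word n} {q : T.Q}
    (hw : w ≠ []) (h : dsts T w q = q) (hc : ¬ NonConst (hmap T q)) :
    PurelyPeriodic (hmap T q fun _ => default) := by
  obtain ⟨K, hK⟩ := hT 1
  -- going round the circuit `K` times gives a circuit with nonempty output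
  set v := (List.replicate K w).flatten with hv
  have hvl : K ≤ v.length := by
    have : 0 < w.length := List.length_pos_iff.2 hw
    rw [hv]
    simp only [List.length_flatten, List.map_replicate, List.sum_replicate, smul_eq_mul]
    exact Nat.le_mul_of_pos_right K this
  have e := hT.sem.word v q fun _ => default
  rw [dsts_iterate h, const_of_not_nonConst hc _ fun _ => default] at e
  refine ⟨(outs T v q).length, hK v q hvl, fun j => ?_⟩
  exact (congrFun e _).trans (by rw [Nat.add_comm j, app_add])

theorem CoreState.exists_circuit {T : Transducer n} {q : T.Q} (h : CoreState T q) :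
    ∃ w : Word n, w ≠ [] ∧ dsts T w q = q := by
  obtain ⟨k, w, hk, hw, h⟩ := h
  refine ⟨default :: w, by simp, h _⟩

theorem CoreState.purelyPeriodic {T : Transducer n} (hT : Live T) {q : T.Q} (h : CoreState T q)
    (hc : ¬ NonConst (hmap T q)) : PurelyPeriodic (hmap T q fun _ => default) := by
  obtain ⟨w, hw, hq⟩ := h.exists_circuit
  exact purelyPeriodic_of_circuit hT hw hq hc

theorem extentLen_eq (T : Transducer n) (q : T.Q) : extentLen T q = ext (hmap T q) := rfl

theorem extentWord_eq (T : Transducer n) (q : T.Q) : extentWord T q = extW (hmap T q) := rfl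

theorem periodicRoot_eq (T : Transducer n) :
    periodicRoot T = proot (hmap T (Classical.choice T.ne) fun _ => default) := rfl

/-- The state `q` of `T` as a state of `removeIncomplete T`. -/
def rmv (T : Transducer n) (q : T.Q) : (removeIncomplete T).Q := q

theorem rmv_surjective (T : Transducer n) : Function.Surjective (rmv T) := fun q => ⟨q, rfl⟩

theorem rmv_tr (T : Transducer n) (a : A n) (q : T.Q) :
    rmv T (T.tr a q) = (removeIncomplete T).tr a (rmv T q) := rfl

/-- The state of `T` corresponding to a state of `removeIncomplete T`. -/
def unrmv {T : Transducer n} (q : (removeIncomplete T).Q) : T.Q := q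

theorem remove_out_nondeg {T : Transducer n} (h : ∀ q, NonConst (hmap T q)) (a : A n) (q : T.Q) :
    (removeIncomplete T).out a (rmv T q) =
      (T.out a q ++ extW (hmap T (T.tr a q))).drop (ext (hmap T q)) := if_pos h

theorem remove_out_deg {T : Transducer n} (h : ¬ ∀ q, NonConst (hmap T q)) (a : A n) (q : T.Q) :
    (removeIncomplete T).out a q =
      minimalRot (proot (hmap T (Classical.choice T.ne) fun _ => default)) := if_neg h

/-- The relation between `T` and its reduced form `U`, where `κ` sends states of `T` to states
of `U`.  For every word `w` read from `p`, ending at `q = π_T(w,p)`, there is a word `u` such that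
`h_q = u h_{κ q}`, and moreover `λ_T(w,p) u` or `u` itself ends in `λ_U(w, κ p)`.  The first
alternative occurs for nonconstant maps, with `u = Λ(ε,q)`, the second for constant ones; in both
cases a transducer `R` that has read `λ_T(w,p) u` has just read `λ_U(w, κ p)`. -/
def Related (T U : Transducer n) (κ : T.Q → U.Q) : Prop :=
  ∀ (w : Word n) (p : T.Q), ∃ u : Word n,
    (∀ x, hmap T (dsts T w p) x = app u (hmap U (κ (dsts T w p)) x)) ∧
    ((∃ s, s ++ outs U w (κ p) = outs T w p ++ u) ∨ ∃ s, u = s ++ outs U w (κ p))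

theorem remove_spec_nondeg {T : Transducer n} (hT : Live T) (h : ∀ q, NonConst (hmap T q)) :
    Live (removeIncomplete T) ∧ OutCompat (removeIncomplete T) ∧
      (∀ q : T.Q, hmap (removeIncomplete T) (rmv T q) = red (hmap T q)) ∧
      Related T (removeIncomplete T) (rmv T) := by
  have key : ∀ a (q : T.Q) x, hmap T q (app [a] x) =
      app (T.out a q ++ extW (hmap T (T.tr a q))) (red (hmap T (T.tr a q)) x) := by
    intro a q x
    rw [hT.sem, eq_app_red (h _), app_append]
  have hout : ∀ a (q : T.Q), extW (hmap T q) ++ (removeIncomplete T).out a (rmv T q) =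
      T.out a q ++ extW (hmap T (T.tr a q)) := by
    intro a q
    rw [remove_out_nondeg h]
    set W := T.out a q ++ extW (hmap T (T.tr a q)) with hW
    have hle : ext (hmap T q) ≤ W.length := by
      apply ext_le
      obtain ⟨x, y, hxy⟩ := red_disagree (h (T.tr a q))
      refine ⟨app [a] x, app [a] y, ?_⟩
      rw [key, key, ← hW]
      exact fun e => hxy (by
        rw [← app_add W (red (hmap T (T.tr a q)) x) 0, ← app_add W (red (hmap T (T.tr a q)) y) 0]
        exact e)
    have : extW (hmap T q) = W.take (ext (hmap T q)) := by
      have hk := key a q fun _ => default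
      rw [← hW, eq_app_red (h q)] at hk
      conv_rhs at hk => rw [← List.take_append_drop (ext (hmap T q)) W, app_append]
      exact eq_of_app_eq (by simp [extW, hle]) hk
    rw [this, List.take_append_drop]
  have houts : ∀ w (q : T.Q), extW (hmap T q) ++ outs (removeIncomplete T) w (rmv T q) =
      outs T w q ++ extW (hmap T (dsts T w q)) := by
    intro w
    induction w with
    | nil => intro q; simp [outs, dsts]
    | cons a w ih =>
      intro q
      rw [outs, outs, dsts, ← rmv_tr, ← List.append_assoc, hout, List.append_assoc, ih,
        List.append_assoc]
  have hlive : Live (removeIncomplete T) := by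
    intro m
    obtain ⟨C, hC⟩ := (Set.finite_range fun q : T.Q => ext (hmap T q)).bddAbove
    obtain ⟨K, hK⟩ := hT (C + m)
    refine ⟨K, fun w q hw => ?_⟩
    obtain ⟨q, rfl⟩ := rmv_surjective T q
    have h1 := congrArg List.length (houts w q)
    have h2 : ext (hmap T q) ≤ C := hC ⟨q, rfl⟩
    have h3 := hK w q hw
    simp only [List.length_append, extW, pre_length] at h1
    omega
  have hsem : Sem (removeIncomplete T) (fun q => red (hmap T (unrmv q))) := by
    intro a q x
    obtain ⟨q, rfl⟩ := rmv_surjective T q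
    show red (hmap T q) _ = app _ (red (hmap T (T.tr a q)) x)
    apply app_injective (extW (hmap T q))
    rw [← eq_app_red (h q), key, ← app_append, hout]
  have hmapU : ∀ q : T.Q, hmap (removeIncomplete T) (rmv T q) = red (hmap T q) :=
    fun q => hsem.eq_hmap hlive (rmv T q)
  refine ⟨hlive, ?_, hmapU, ?_⟩
  · -- the output words cannot have different lengths, since the maps at the next states
    -- disagree in position `0`
    have hnl : ∀ (p q : T.Q), hmap (removeIncomplete T) (rmv T p) = hmap (removeIncomplete T) (rmv T q) → ∀ a,
        ¬ ((removeIncomplete T).out a (rmv T p)).length <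
          ((removeIncomplete T).out a (rmv T q)).length := by
      intro p q e a hlt
      obtain ⟨x, y, hxy⟩ := red_disagree (h (T.tr a p))
      apply hxy
      have : ∀ z, red (hmap T (T.tr a p)) z 0 =
          ((removeIncomplete T).out a (rmv T q)).getD
            ((removeIncomplete T).out a (rmv T p)).length default := by
        intro z
        have e' := congrFun (congrFun e (app [a] z)) ((removeIncomplete T).out a (rmv T p)).length
        rw [hlive.sem, hlive.sem, app_lt hlt, ← Nat.add_zero
          ((removeIncomplete T).out a (rmv T p)).length, app_add] at e'
        rw [← hmapU, rmv_tr]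
        exact e'
      rw [this, this]
    intro p q e a
    obtain ⟨p, rfl⟩ := rmv_surjective T p
    obtain ⟨q, rfl⟩ := rmv_surjective T q
    have hl := le_antisymm (not_lt.mp (hnl q p e.symm a)) (not_lt.mp (hnl p q e a))
    have e' := congrFun e (app [a] fun _ => default)
    rw [hlive.sem, hlive.sem] at e'
    exact eq_of_app_eq hl e'
  · intro w p
    refine ⟨extW (hmap T (dsts T w p)), fun x => ?_, Or.inl ⟨_, houts w p⟩⟩
    rw [hmapU]
    exact eq_app_red (h _) x

theorem remove_spec_deg {T : Transducer n} (hT : Live T) (hc : IsCore T)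
    (h : ¬ ∀ q, NonConst (hmap T q)) :
    Live (removeIncomplete T) ∧ OutCompat (removeIncomplete T) ∧
      (∀ q : T.Q, hmap (removeIncomplete T) (rmv T q) = red (hmap T q)) ∧
      Related T (removeIncomplete T) (rmv T) := by
  have hreach : ∀ p q : T.Q, ∃ w, dsts T w p = q := fun p q => by
    obtain ⟨k, w, -, -, hw⟩ := hc q
    exact ⟨w, hw p⟩
  have hconst : ∀ q, ¬ NonConst (hmap T q) := by
    obtain ⟨p, hp⟩ := not_forall.1 h
    rintro q ⟨j, x, y, hxy⟩
    obtain ⟨w, rfl⟩ := hreach p q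
    refine hp ⟨(outs T w p).length + j, app w x, app w y, ?_⟩
    rwa [hT.sem.word, hT.sem.word, app_add, app_add]
  have hper : ∀ q, PurelyPeriodic (hmap T q fun _ => default) :=
    fun q => (hc q).purelyPeriodic hT (hconst q)
  set z := minimalRot (proot (hmap T (Classical.choice T.ne) fun _ => default)) with hz
  have hzq : ∀ q, minimalRot (proot (hmap T q fun _ => default)) = z := by
    intro q
    obtain ⟨w, hw⟩ := hreach (Classical.choice T.ne) q
    have e := hT.sem.word w (Classical.choice T.ne) fun _ => default
    rw [const_of_not_nonConst (hconst _) _ fun _ => default, hw] at e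
    exact (minimalRot_proot_of_app (hper _) e).symm
  have hz0 : z ≠ [] := minimalRot_proot_ne_nil (hper _)
  have hout : ∀ a q, (removeIncomplete T).out a q = z := remove_out_deg h
  have hlive : Live (removeIncomplete T) := by
    refine fun m => ⟨m, fun w q hw => hw.trans ?_⟩
    clear hw
    induction w generalizing q with
    | nil => simp
    | cons a w ih =>
      have := List.length_pos_iff.2 hz0
      have := ih ((removeIncomplete T).tr a q)
      simp only [outs, hout, List.length_append, List.length_cons]
      omega
  have hsem : Sem (removeIncomplete T) (fun _ _ => rep z) := by
    intro a q x
    rw [hout]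
    exact rep_eq_app z
  have hmapU := hsem.eq_hmap hlive
  refine ⟨hlive, fun p q _ a => by rw [hout, hout], fun q => ?_, fun w p => ?_⟩
  · rw [hmapU, red_of_const (hconst q), hzq]
  · obtain ⟨u, hu⟩ := exists_app_rep (hper (dsts T w p))
    rw [hzq] at hu
    refine ⟨u ++ outs (removeIncomplete T) w (rmv T p), fun x => ?_, Or.inr ⟨u, rfl⟩⟩
    rw [const_of_not_nonConst (hconst _) _ fun _ => default, hu, hmapU, app_append]
    -- prepending `z z … z` to `z z z …` has no effect
    have e := hsem.word w (rmv T p) x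
    exact congrArg _ e

/-- The properties of the minimal representative used below: its states are images of states
of `T`, and the induced maps are the reductions of those of `T`. -/
theorem minRep_spec {T : Transducer n} (hT : Live T) (hs : StronglySync T) (hc : IsCore T) :
    Live (minRep T) ∧ Function.Injective (hmap (minRep T)) ∧
      ∃ κ : T.Q → (minRep T).Q, Function.Surjective κ ∧
        (∀ a q, κ (T.tr a q) = (minRep T).tr a (κ q)) ∧
        (∀ q, hmap (minRep T) (κ q) = red (hmap T q)) ∧ Related T (minRep T) κ := by
  obtain ⟨hl, ho, hm, hr⟩ : Live (removeIncomplete T) ∧ OutCompat (removeIncomplete T) ∧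
      (∀ q : T.Q, hmap (removeIncomplete T) (rmv T q) = red (hmap T q)) ∧
      Related T (removeIncomplete T) (rmv T) := by
    by_cases h : ∀ q, NonConst (hmap T q)
    · exact remove_spec_nondeg hT h
    · exact remove_spec_deg hT hc h
  have hd : ∀ w (q : T.Q), rmv T (dsts T w q) = dsts (removeIncomplete T) w (rmv T q) :=
    dsts_map (rmv_tr T)
  have hsy : ∀ k, SyncAt T k → SyncAt (removeIncomplete T) k := fun k hk =>
    hk.map (rmv_surjective T) (rmv_tr T)
  have hsU : StronglySync (removeIncomplete T) := hs.imp hsy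
  have hcU : ∀ q : T.Q, CoreStateE (removeIncomplete T) (rmv T q) := by
    intro q
    obtain ⟨k, w, hk, hw, h⟩ := hc q
    exact Or.inl ⟨k, w, hsy k hk, hw, fun p => (hd w p).symm.trans (congrArg (rmv T) (h p))⟩
  have hlV := hl.core hsU
  have hoV : OutCompat (coreT (removeIncomplete T)) := by
    intro p q e a
    rw [hmap_core hsU hl, hmap_core hsU hl] at e
    exact ho _ _ e a
  -- every state of `removeIncomplete T` is in its core
  let ι : T.Q → (coreT (removeIncomplete T)).Q := fun q => ⟨rmv T q, hcU q⟩
  have hι : ∀ q, cval (ι q) = rmv T q := fun _ => rfl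
  have htr : ∀ a (q : T.Q), cls _ (ι (T.tr a q)) = (minRep T).tr a (cls _ (ι q)) := by
    intro a q
    refine Eq.trans ?_ (cls_tr hlV hoV a _)
    refine congrArg _ (Subtype.ext ?_)
    exact (coreT_tr hsU a (ι q)).symm
  have hmm : ∀ q : T.Q, hmap (minRep T) (cls _ (ι q)) = hmap (removeIncomplete T) (rmv T q) :=
    fun q => (hmap_quot hlV hoV _).trans (hmap_core hsU hl _)
  refine ⟨hlV.quot hoV, hmap_quot_injective hlV hoV, fun q => cls _ (ι q), ?_, htr, ?_, ?_⟩
  · intro c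
    obtain ⟨q, rfl⟩ := cls_surjective _ c
    exact ⟨q.1, rfl⟩
  · exact fun q => (hmm q).trans (hm q)
  · intro w p
    obtain ⟨u, h1, h2⟩ := hr w p
    have e : outs (minRep T) w (cls _ (ι p)) = outs (removeIncomplete T) w (rmv T p) :=
      (outs_map (cls_tr hlV hoV) (cls_out hoV) w _).symm.trans (coreT_outs hsU w _)
    refine ⟨u, fun x => ?_, ?_⟩
    · rw [hmm]; exact h1 x
    · rw [e]; exact h2

theorem range_hmap_minRep {T : Transducer n} (hT : Live T) (hs : StronglySync T)
    (hc : IsCore T) : Set.range (hmap (minRep T)) = red '' Set.range (hmap T) := by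
  obtain ⟨-, -, κ, hκ, -, hm, -⟩ := minRep_spec hT hs hc
  rw [← hκ.range_comp, ← Set.range_comp]
  exact congrArg _ (funext hm)

theorem omegaEq_of_range {T U : Transducer n} (hT : Function.Injective (hmap T))
    (hU : Function.Injective (hmap U)) (h : Set.range (hmap T) = Set.range (hmap U)) :
    OmegaEq T U := by
  refine ⟨(Equiv.ofInjective _ hT).trans ((Equiv.setCongr h).trans
    (Equiv.ofInjective _ hU).symm), fun q => ?_⟩
  exact (congrArg Subtype.val
    ((Equiv.ofInjective _ hU).apply_symm_apply (Equiv.setCongr h ⟨hmap T q, q, rfl⟩))).symm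

/-! ### Comparison of the two products -/

/-- After a sufficiently long word `w`, the map at the state of `P * R` reached is a fixed word
followed by the map at the state of `[P] * [R]` reached. -/
theorem hmap_prod_eq_app {P R P' R' : Transducer n} (lP : Live P) (lR : Live R) (lP' : Live P')
    (lR' : Live R') {κ : P.Q → P'.Q} {μ : R.Q → R'.Q}
    (hκ : ∀ a q, κ (P.tr a q) = P'.tr a (κ q)) (hμ : ∀ a q, μ (R.tr a q) = R'.tr a (μ q))
    (rP : Related P P' κ) (rR : Related R R' μ) {k : ℕ} (hk : SyncAt R k) (w : Word n)
    (p : P.Q) (r : R.Q) (hw : k ≤ (outs P' w (κ p)).length) :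
    ∃ v, ∀ x, hmap (prodT P R) (dsts (prodT P R) w (pair p r)) x =
      app v (hmap (prodT P' R') (dsts (prodT P' R') w (pair (κ p) (μ r))) x) := by
  obtain ⟨u, hu, hu'⟩ := rP w p
  set r₁ := dsts R (outs P w p) r with hr₁
  have hst : dsts R u r₁ = dsts R (outs P' w (κ p)) r := by
    rcases hu' with ⟨s, hs⟩ | ⟨s, hs⟩
    · rw [hr₁, ← dsts_append, ← hs, dsts_append]
      exact hk.dsts_eq hw _ _
    · rw [hs, dsts_append]
      exact hk.dsts_eq hw _ _
  obtain ⟨v, hv, -⟩ := rR [] (dsts R u r₁)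
  refine ⟨outs R u r₁ ++ v, fun x => ?_⟩
  rw [dsts_prod, dsts_prod, hmap_prod lP lR, hmap_prod lP' lR', ← hr₁]
  show hmap R r₁ (hmap P (dsts P w p) x) = _
  rw [hu, lR.sem.word, app_append]
  congr 1
  have e : dsts R' (outs P' w (κ p)) (μ r) = μ (dsts R u r₁) := by
    rw [hst, dsts_map hμ]
  rw [e, ← dsts_map hκ]
  exact hv _

/-- For all `P, R ∈ \widetilde{P}_n`, one has `[P][R] = [P ∘ R]`: the
product in `M_n` of the minimal representatives of `P` and `R` equals (i.e. is ω-equal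
to) the minimal representative of the product of `P` and `R` in `\widetilde{P}_n`. -/
theorem minRep_mul_Ptilde (n : ℕ) (P R : Transducer n)
    (hP : PtildeMem P) (hR : PtildeMem R) :
    OmegaEq (mulT (minRep P) (minRep R)) (minRep (ptildeMul P R)) := by
  obtain ⟨-, sP, cP, yP, -⟩ := hP
  obtain ⟨-, sR, cR, yR, -⟩ := hR
  have lP := yP.live
  have lR := yR.live
  obtain ⟨lP', -, κ, hκs, hκ, -, rP⟩ := minRep_spec lP sP cP
  obtain ⟨lR', -, μ, hμs, hμ, -, rR⟩ := minRep_spec lR sR cR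
  have sP' : StronglySync (minRep P) := sP.imp fun _ h => h.map hκs hκ
  have sR' : StronglySync (minRep R) := sR.imp fun _ h => h.map hμs hμ
  -- the product of the minimal representatives
  have l1 : Live (prodT (minRep P) (minRep R)) := lP'.prod lR'
  have s1 : StronglySync (prodT (minRep P) (minRep R)) := exists_sync_prod lP' sP' sR'
  have s1c : StronglySync (coreT (prodT (minRep P) (minRep R))) := s1.imp fun _ h => h.core
  -- the product of `P` and `R`; synchronous, so the quotient is well behaved
  have l0 : Live (prodT P R) := lP.prod lR
  have s0 : StronglySync (prodT P R) := exists_sync_prod lP sP sR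
  have y0 : Synchronous (prodT P R) := fun a q => by
    show (outs R (P.out a q.1) q.2).length = 1
    rw [yR.outs_length, yP]
  have o0 : OutCompat (prodT P R) := by
    intro p q e a
    have e' := congrFun e (app [a] fun _ => default)
    rw [l0.sem, l0.sem] at e'
    exact eq_of_app_eq (by rw [y0, y0]) e'
  have l2 : Live (quotT (prodT P R)) := l0.quot o0
  have q2 : ∀ k, SyncAt (prodT P R) k → SyncAt (quotT (prodT P R)) k := fun k h =>
    h.map (cls_surjective _) (cls_tr l0 o0)
  have s2 : StronglySync (quotT (prodT P R)) := s0.imp q2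
  have s2c : StronglySync (coreT (quotT (prodT P R))) := s2.imp fun _ h => h.core
  -- a common synchronizing level `K`, beyond which `[P]` writes at least `k` letters
  obtain ⟨k, hk⟩ := sR
  obtain ⟨L, hL⟩ := lP' k
  obtain ⟨k1, hk1⟩ := s1
  obtain ⟨k0, hk0⟩ := s0
  set K := L + k1 + k0 with hK
  have hK1 : SyncAt (prodT (minRep P) (minRep R)) K := hk1.mono (by omega)
  have hK0 : SyncAt (prodT P R) K := hk0.mono (by omega)
  let p : P.Q := Classical.choice P.ne
  let r : R.Q := Classical.choice R.ne
  have key : ∀ w : Word n, w.length = K →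
      red (hmap (prodT P R) (dsts (prodT P R) w (pair p r))) =
        red (hmap (prodT (minRep P) (minRep R))
          (dsts (prodT (minRep P) (minRep R)) w (pair (κ p) (μ r)))) := by
    intro w hw
    obtain ⟨v, hv⟩ := hmap_prod_eq_app lP lR lP' lR' hκ hμ rP rR hk w p r
      (hL _ _ (by omega))
    refine red_app hv fun hc => ?_
    have : CoreState (prodT P R) (dsts (prodT P R) w (pair p r)) :=
      ⟨K, w, hK0, hw, fun q => hK0 w hw _ _⟩
    exact this.purelyPeriodic l0 hc
  refine omegaEq_of_range (minRep_spec (l1.core ⟨K, hK1⟩) s1c (isCore_core ⟨K, hK1⟩)).2.1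
    (minRep_spec (l2.core s2) s2c (isCore_core s2)).2.1 ?_
  rw [mulT, ptildeMul, range_hmap_minRep (l1.core ⟨K, hK1⟩) s1c (isCore_core ⟨K, hK1⟩),
    range_hmap_minRep (l2.core s2) s2c (isCore_core s2),
    range_hmap_core l1 hK1 (pair (κ p) (μ r)),
    range_hmap_core l2 (q2 K hK0) (cls (prodT P R) (pair p r))]
  have hq : ∀ w, hmap (quotT (prodT P R)) (dsts (quotT (prodT P R)) w (cls (prodT P R) (pair p r))) =
      hmap (prodT P R) (dsts (prodT P R) w (pair p r)) := fun w => by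
    rw [← dsts_map (cls_tr l0 o0), hmap_quot l0 o0]
  ext f
  constructor
  · rintro ⟨_, ⟨w, hw, rfl⟩, rfl⟩
    exact ⟨_, ⟨w, hw, rfl⟩, by rw [hq, key w hw]⟩
  · rintro ⟨_, ⟨w, hw, rfl⟩, rfl⟩
    exact ⟨_, ⟨w, hw, rfl⟩, by rw [hq, key w hw]⟩

end ShiftPaper
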